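/- (Propagation of chaos under parametrized joint policies.) Let 𝒳, 𝒰, 𝒳⁰, 𝒰⁰ be compact metric spaces, with p, p⁰, r Lipschitz and equi-Lipschitz policy classes. Let Ξ be a compact parameter space, Γ : Ξ → (decision rules 𝒳 → 𝒫(𝒰)) an L_Γ-Lipschitz map into L_Π-Lipschitz decision rules, and let the joint parametrized policy π̃^θ(u⁰, ξ | x⁰, μ), its log-gradient ∇_θ log π̃^θ (or gradient ∇_θ π̃^θ), all be Lipschitz and uniformly bounded. Consider the N-agent system where at each step (u_t^{0,N}, ξ_t^N) ∼ π̃^θ(·|x_t^{0,N}, μ_t^N), each minor action u_t^{i,N} ∼ Γ(ξ_t^N)(·|x_t^{i,N}), and transitions follow p, p⁰; and the limiting system where (u⁰_t, ξ_t) ∼ π̃^θ(·|x⁰_t, μ_t) and μ_{t+1} = T(x⁰_t, u⁰_t, μ_t, μ_t ⊗ Γ(ξ_t)). Then for any equi-Lipschitz family ℱ of functions on 𝒳⁰ × 𝒰⁰ × 𝒫(𝒳) and every t ∈ ℕ, uniformly over f ∈ ℱ and policy parameters: | E[ f(x_t^{0,N}, u_t^{0,N}, μ_t^N) − f(x⁰_t,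 u⁰_t, μ_t) ] | → 0 as N → ∞. -/

import Mathlib

open MeasureTheory

noncomputable instance {X : Type*} [MeasurableSpace X] : MeasurableSpace (ProbabilityMeasure X) :=
  inferInstanceAs (MeasurableSpace {μ : Measure X // IsProbabilityMeasure μ})

/-- `W₁` distance on probability measures, via Kantorovich duality. -/
noncomputable def W1 {X : Type*} [MeasurableSpace X] [PseudoMetricSpace X]
    (μ ν : ProbabilityMeasure X) : ℝ :=
  ⨆ f : {f : X → ℝ // LipschitzWith 1 f},
    |∫ x, (f : X → ℝ) x ∂(μ : Measure X) - ∫ x, (f : X → ℝ) x ∂(ν : Measure X)|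

/-- Empirical measure of `N` points (an arbitrary probability measure if `N = 0`). -/
noncomputable def emp {X : Type*} [MeasurableSpace X] [Nonempty X] (N : ℕ) (x : Fin N → X) :
    ProbabilityMeasure X := by
  classical
  exact if hN : N = 0 then ⟨Measure.dirac (Classical.arbitrary X), inferInstance⟩
  else ⟨(N : ENNReal)⁻¹ • ∑ i : Fin N, Measure.dirac (x i), by
    constructor
    simp only [Measure.smul_apply, Measure.coe_finset_sum, Finset.sum_apply,
      Measure.dirac_apply' _ MeasurableSet.univ, smul_eq_mul]
    simp only [Set.indicator_univ, Pi.one_apply, Finset.sum_const, Finset.card_univ,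
      Fintype.card_fin, nsmul_eq_mul, mul_one]
    exact ENNReal.inv_mul_cancel (by exact_mod_cast hN) (by simp)⟩

/-- Law of `(x⁰_t, (u⁰_t, ξ_t), (x^{i,N}_t)_i)` in the `N`-agent M3FC system under the
parametrized joint policy `π̃^θ` and decision-rule map `Γ`, started from the initial law `ι`:
at each step the joint action `(u⁰,ξ)` is sampled from `π̃^θ(·|x⁰,μ^N)`, each minor agent
samples its action from `Γ(ξ)(·|xⁱ)`, and states transition through `p`, `p⁰`. -/
noncomputable def pLawNFrom {X U X0 U0 Xi Θ : Type*} [MeasurableSpace X] [Nonempty X]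
    [MeasurableSpace U] [MeasurableSpace X0] [MeasurableSpace U0] [MeasurableSpace Xi]
    (p : X → U → X0 → U0 → ProbabilityMeasure X → ProbabilityMeasure X)
    (p0 : X0 → U0 → ProbabilityMeasure X → ProbabilityMeasure X0)
    (Γ : Xi → X → ProbabilityMeasure U)
    (pit : Θ → X0 → ProbabilityMeasure X → ProbabilityMeasure (U0 × Xi))
    (θ : Θ) (N : ℕ) (ι : Measure (X0 × (U0 × Xi) × (Fin N → X))) :
    ℕ → Measure (X0 × (U0 × Xi) × (Fin N → X))
  | 0 => ι
  | t + 1 => (pLawNFrom p p0 Γ pit θ N ι t).bind fun s =>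
      (((p0 s.1 s.2.1.1 (emp N s.2.2) : Measure X0)).prod
        (Measure.pi fun i => ((Γ s.2.1.2 (s.2.2 i) : Measure U)).bind
          fun u => (p (s.2.2 i) u s.1 s.2.1.1 (emp N s.2.2) : Measure X))).bind
        fun y => ((pit θ y.1 (emp N y.2) : Measure (U0 × Xi))).map fun a => (y.1, a, y.2)

/-- Law of `(x⁰_t, (u⁰_t, ξ_t), μ_t)` in the limiting M3FC process under the parametrized
joint policy `π̃^θ`, where `TG x⁰ u⁰ ξ μ` is the deterministic mean field transition
`T(x⁰,u⁰,μ, μ ⊗ Γ(ξ))`, started from the initial law `ι`. -/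
noncomputable def pLimLawFrom {X U0 X0 Xi Θ : Type*} [MeasurableSpace X]
    [MeasurableSpace X0] [MeasurableSpace U0] [MeasurableSpace Xi]
    (p0 : X0 → U0 → ProbabilityMeasure X → ProbabilityMeasure X0)
    (pit : Θ → X0 → ProbabilityMeasure X → ProbabilityMeasure (U0 × Xi))
    (TG : X0 → U0 → Xi → ProbabilityMeasure X → ProbabilityMeasure X)
    (θ : Θ) (ι : Measure (X0 × (U0 × Xi) × ProbabilityMeasure X)) :
    ℕ → Measure (X0 × (U0 × Xi) × ProbabilityMeasure X)
  | 0 => ι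
  | t + 1 => (pLimLawFrom p0 pit TG θ ι t).bind fun s =>
      ((p0 s.1 s.2.1.1 s.2.2 : Measure X0)).bind fun y0 =>
        ((pit θ y0 (TG s.1 s.2.1.1 s.2.1.2 s.2.2) : Measure (U0 × Xi))).map
          fun a => (y0, a, TG s.1 s.2.1.1 s.2.1.2 s.2.2)

/-!
By Arzelà–Ascoli, the 1-Lipschitz functions on a compact space that vanish at a base point form a
totally bounded set, so up to `ε` the distance `W1` is controlled by finitely many test functions.
For each of them the variance of an average of `N` independent terms is `O(1 / N)`, whatever the
laws of the terms. Hence, uniformly in the state, one step of the `N`-agent system sends the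
empirical measure close to the image of the current one under the limiting mean field transition.
The limiting transition kernel is Lipschitz in `W1`, so the one-step errors accumulate over `t`
steps to at most a geometric sum times their common bound.
-/

open scoped Finset
open ProbabilityTheory Filter Topology NNReal BoundedContinuousFunction

section Integral

variable {Y : Type*} [MeasurableSpace Y]

lemma abs_integral_sub_integral_le {μ : Measure Y} [IsProbabilityMeasure μ] {f g : Y → ℝ}
    (hf : Integrable f μ) (hg : Integrable g μ) {C : ℝ} (h : ∀ y, |f y - g y| ≤ C) :
    |∫ y, f y ∂μ - ∫ y, g y ∂μ| ≤ C := by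
  rw [← integral_sub hf hg]
  simpa using norm_integral_le_of_norm_le_const (μ := μ) (f := fun y => f y - g y) (.of_forall h)

lemma integrable_of_continuous [TopologicalSpace Y] [CompactSpace Y] [OpensMeasurableSpace Y]
    {μ : Measure Y} [IsFiniteMeasure μ] {f : Y → ℝ} (hf : Continuous f) : Integrable f μ :=
  hf.integrable_of_hasCompactSupport (.of_compactSpace f)

end Integral

section Kantorovich

variable {X : Type*} [PseudoMetricSpace X]

lemma abs_sub_le_diam_univ [CompactSpace X] {f : X → ℝ} (hf : LipschitzWith 1 f)
    (x y : X) : |f x - f y| ≤ Metric.diam (Set.univ : Set X) :=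
  (hf.dist_le_mul x y).trans <| by
    simpa using Metric.dist_le_diam_of_mem isCompact_univ.isBounded (Set.mem_univ x)
      (Set.mem_univ y)

lemma mem_Icc_of_lipschitzWith_one [CompactSpace X] {f : X → ℝ} (hf : LipschitzWith 1 f)
    (x₀ x : X) : f x ∈ Set.Icc (f x₀ - Metric.diam (Set.univ : Set X))
      (f x₀ + Metric.diam (Set.univ : Set X)) := by
  obtain ⟨hlow, hup⟩ := abs_le.1 (abs_sub_le_diam_univ hf x x₀)
  constructor <;> linarith

lemma totallyBounded_lipschitz_vanishing [CompactSpace X] (x₀ : X) :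
    TotallyBounded {f : X →ᵇ ℝ | LipschitzWith 1 f ∧ f x₀ = 0} := by
  refine (arzela_ascoli (Metric.closedBall 0 (Metric.diam (Set.univ : Set X)))
    (isCompact_closedBall _ _) _ ?_ ?_).totallyBounded.subset subset_closure
  · rintro f x ⟨hf, hf₀⟩
    simpa [hf₀] using abs_sub_le_diam_univ hf x x₀
  · exact (LipschitzWith.uniformEquicontinuous _ 1 fun f => f.2.1).equicontinuous

variable [MeasurableSpace X]

lemma W1_le {μ ν : ProbabilityMeasure X} {C : ℝ}
    (h : ∀ f : X → ℝ, LipschitzWith 1 f →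
      |∫ x, f x ∂(μ : Measure X) - ∫ x, f x ∂(ν : Measure X)| ≤ C) : W1 μ ν ≤ C :=
  have : Nonempty {f : X → ℝ // LipschitzWith 1 f} := ⟨fun _ => 0, LipschitzWith.const' 0⟩
  ciSup_le fun f => h f f.2

lemma W1_self (μ : ProbabilityMeasure X) : W1 μ μ = 0 := by
  simp [W1]

lemma W1_comm (μ ν : ProbabilityMeasure X) : W1 μ ν = W1 ν μ := by
  simp only [W1, abs_sub_comm]

variable [CompactSpace X] [BorelSpace X]

lemma abs_integral_sub_integral_le_two_mul_diam (μ ν : ProbabilityMeasure X) {f : X → ℝ}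
    (hf : LipschitzWith 1 f) :
    |∫ x, f x ∂(μ : Measure X) - ∫ x, f x ∂(ν : Measure X)|
      ≤ 2 * Metric.diam (Set.univ : Set X) := by
  obtain ⟨x₀⟩ := μ.nonempty
  have deviation (ρ : ProbabilityMeasure X) :
      |∫ x, f x ∂(ρ : Measure X) - f x₀| ≤ Metric.diam (Set.univ : Set X) := by
    simpa using abs_integral_sub_integral_le (μ := (ρ : Measure X))
      (integrable_of_continuous hf.continuous) (integrable_const (f x₀))
      (abs_sub_le_diam_univ hf · x₀)
  linarith [abs_sub_le (∫ x, f x ∂(μ : Measure X)) (f x₀) (∫ x, f x ∂(ν : Measure X)),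
    deviation μ, deviation ν, abs_sub_comm (f x₀) (∫ x, f x ∂(ν : Measure X))]

lemma abs_integral_sub_le_W1 (μ ν : ProbabilityMeasure X) {f : X → ℝ} (hf : LipschitzWith 1 f) :
    |∫ x, f x ∂(μ : Measure X) - ∫ x, f x ∂(ν : Measure X)| ≤ W1 μ ν := by
  refine le_ciSup (f := fun f : {f : X → ℝ // LipschitzWith 1 f} =>
    |∫ x, (f : X → ℝ) x ∂(μ : Measure X) - ∫ x, (f : X → ℝ) x ∂(ν : Measure X)|) ?_ ⟨f, hf⟩
  refine ⟨2 * Metric.diam (Set.univ : Set X), ?_⟩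
  rintro _ ⟨g, rfl⟩
  exact abs_integral_sub_integral_le_two_mul_diam μ ν g.2

lemma W1_nonneg (μ ν : ProbabilityMeasure X) : 0 ≤ W1 μ ν :=
  (abs_nonneg _).trans (abs_integral_sub_le_W1 μ ν (LipschitzWith.const' 0))

lemma W1_triangle (μ ν ρ : ProbabilityMeasure X) : W1 μ ρ ≤ W1 μ ν + W1 ν ρ :=
  W1_le fun _ hf => (abs_sub_le _ _ _).trans
    (add_le_add (abs_integral_sub_le_W1 μ ν hf) (abs_integral_sub_le_W1 ν ρ hf))

lemma exists_finset_W1_le_add_sum {ε : ℝ} (hε : 0 < ε) :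
    ∃ T : Finset (X →ᵇ ℝ), (∀ g ∈ T, LipschitzWith 1 g) ∧ ∀ μ ν : ProbabilityMeasure X,
      W1 μ ν ≤ ε + ∑ g ∈ T, |∫ x, g x ∂(μ : Measure X) - ∫ x, g x ∂(ν : Measure X)| := by
  rcases isEmpty_or_nonempty X with hX | ⟨⟨x₀⟩⟩
  · exact ⟨∅, by simp, fun μ => (not_isEmpty_iff.2 μ.nonempty hX).elim⟩
  obtain ⟨t, ht, htfin, hcover⟩ := Metric.finite_approx_of_totallyBounded
    (totallyBounded_lipschitz_vanishing x₀) (ε / 2) (half_pos hε)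
  refine ⟨htfin.toFinset, fun g hg => (ht (htfin.mem_toFinset.1 hg)).1,
    fun μ ν => W1_le fun f hf => ?_⟩
  let f₀ : X →ᵇ ℝ := mkOfCompact ⟨fun x => f x - f x₀, hf.continuous.sub continuous_const⟩
  have hf₀ : LipschitzWith 1 f₀ := .of_dist_le_mul fun x y => by
    simpa [f₀, Real.dist_eq] using hf.dist_le_mul x y
  obtain ⟨g, hgt, hg⟩ := Set.mem_iUnion₂.1 (hcover ⟨hf₀, sub_self (f x₀)⟩)
  have near (ρ : ProbabilityMeasure X) :
      |∫ x, f x ∂(ρ : Measure X) - f x₀ - ∫ x, g x ∂(ρ : Measure X)| ≤ ε / 2 := by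
    have := abs_integral_sub_integral_le (f₀.integrable (ρ : Measure X)) (g.integrable _)
      fun x => (dist_coe_le_dist x).trans (Metric.mem_ball.1 hg).le
    simpa [f₀, integral_sub (integrable_of_continuous (μ := (ρ : Measure X)) hf.continuous)]
      using this
  have hsum := Finset.single_le_sum (f := fun g : X →ᵇ ℝ =>
    |∫ x, g x ∂(μ : Measure X) - ∫ x, g x ∂(ν : Measure X)|) (fun _ _ => abs_nonneg _)
    (htfin.mem_toFinset.2 hgt)
  have hμ := abs_le.1 (near μ)
  have hν := abs_le.1 (near ν)
  have hg' := abs_le.1 hsum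
  exact abs_le.2 ⟨by linarith, by linarith⟩

end Kantorovich

section GiryBorel

variable {X : Type*} [MeasurableSpace X]

lemma measurable_toMeasure : Measurable fun μ : ProbabilityMeasure X => (μ : Measure X) :=
  measurable_subtype_coe

lemma measurable_integral_probabilityMeasure {f : X → ℝ} (hf : Measurable f) :
    Measurable fun μ : ProbabilityMeasure X => ∫ x, f x ∂(μ : Measure X) :=
  (hf.stronglyMeasurable.integral_kernel (κ := ⟨_, measurable_toMeasure⟩)).measurable

lemma probabilityMeasure_topology_eq_generateFrom [TopologicalSpace X] [OpensMeasurableSpace X] :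
    (inferInstance : TopologicalSpace (ProbabilityMeasure X)) = .generateFrom
      {S | ∃ (f : X →ᵇ ℝ) (V : Set ℝ), IsOpen V ∧
        (fun μ : ProbabilityMeasure X => ∫ x, f x ∂(μ : Measure X)) ⁻¹' V = S} := by
  refine le_antisymm (le_generateFrom ?_) (continuous_id_iff_le.1 ?_)
  · rintro _ ⟨f, V, hV, rfl⟩
    exact hV.preimage (ProbabilityMeasure.continuous_integral_boundedContinuousFunction f)
  · exact (@ProbabilityMeasure.continuous_iff_forall_continuous_integral
      _ _ _ _ (ProbabilityMeasure X) (.generateFrom _) id).2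
      fun f => continuous_def.2 fun V hV => .basic _ ⟨f, V, hV, rfl⟩

lemma measurable_toMeasure_borel [TopologicalSpace X] [HasOuterApproxClosed X] [BorelSpace X] :
    Measurable[borel (ProbabilityMeasure X)] fun μ : ProbabilityMeasure X => (μ : Measure X) := by
  let : MeasurableSpace (ProbabilityMeasure X) := borel _
  have : BorelSpace (ProbabilityMeasure X) := ⟨rfl⟩
  exact .measure_of_isPiSystem_of_isProbabilityMeasure
    (BorelSpace.measurable_eq (α := X)) isPiSystem_isOpen fun G hG =>
      (lowerSemicontinuous_iff_le_liminf.2 fun μ =>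
        ProbabilityMeasure.le_liminf_measure_open_of_tendsto tendsto_id hG).measurable

variable [MetricSpace X] [CompactSpace X] [BorelSpace X]

instance secondCountableTopology_probabilityMeasure :
    SecondCountableTopology (ProbabilityMeasure X) :=
  letI := TopologicalSpace.pseudoMetrizableSpacePseudoMetric (ProbabilityMeasure X)
  inferInstance

instance borelSpace_probabilityMeasure : BorelSpace (ProbabilityMeasure X) := by
  refine ⟨le_antisymm measurable_toMeasure_borel.comap_le ?_⟩
  rw [borel_eq_generateFrom_of_subbasis probabilityMeasure_topology_eq_generateFrom]
  refine MeasurableSpace.generateFrom_le ?_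
  rintro _ ⟨f, V, hV, rfl⟩
  exact measurable_integral_probabilityMeasure f.continuous.measurable hV.measurableSet

end GiryBorel

section WassersteinMetric

variable {X : Type*} [MetricSpace X] [CompactSpace X] [MeasurableSpace X] [BorelSpace X]

lemma abs_integral_sub_le_mul_W1 (μ ν : ProbabilityMeasure X) {L : ℝ≥0} {f : X → ℝ}
    (hf : LipschitzWith L f) :
    |∫ x, f x ∂(μ : Measure X) - ∫ x, f x ∂(ν : Measure X)| ≤ L * W1 μ ν := by
  rcases eq_or_ne L 0 with rfl | hL
  · obtain ⟨x₀⟩ := μ.nonempty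
    have hconst (x : X) : f x = f x₀ := by simpa using hf.dist_le_mul x x₀
    simp [hconst]
  have hscaled : LipschitzWith 1 fun x => (L : ℝ)⁻¹ * f x := by
    have := (lipschitzWith_smul (L : ℝ)⁻¹).comp hf
    rwa [nnnorm_inv, NNReal.nnnorm_eq, inv_mul_cancel₀ hL] at this
  have := abs_integral_sub_le_W1 μ ν hscaled
  rw [integral_const_mul, integral_const_mul, ← mul_sub, abs_mul, abs_inv, NNReal.abs_eq] at this
  rwa [inv_mul_le_iff₀ (by positivity)] at this

lemma tendsto_W1_nhds (μ : ProbabilityMeasure X) : Tendsto (fun ν => W1 ν μ) (𝓝 μ) (𝓝 0) := by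
  refine tendsto_order.2 ⟨fun a ha => .of_forall fun ν => ha.trans_le (W1_nonneg ν μ),
    fun ε hε => ?_⟩
  obtain ⟨T, -, hT⟩ := exists_finset_W1_le_add_sum (X := X) (half_pos hε)
  have hsum : Tendsto (fun ν : ProbabilityMeasure X =>
      ∑ g ∈ T, |∫ x, g x ∂(ν : Measure X) - ∫ x, g x ∂(μ : Measure X)|) (𝓝 μ) (𝓝 0) := by
    have : Continuous fun ν : ProbabilityMeasure X =>
        ∑ g ∈ T, |∫ x, g x ∂(ν : Measure X) - ∫ x, g x ∂(μ : Measure X)| :=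
      continuous_finsetSum _ fun g _ =>
        ((ProbabilityMeasure.continuous_integral_boundedContinuousFunction g).sub
          continuous_const).abs
    simpa using this.tendsto μ
  filter_upwards [hsum.eventually_lt_const (half_pos hε)] with ν hν
  linarith [hT ν μ]

lemma nhds_eq_comap_W1 (μ : ProbabilityMeasure X) : 𝓝 μ = (𝓝 0).comap fun ν => W1 ν μ := by
  refine le_antisymm (tendsto_iff_comap.1 (tendsto_W1_nhds μ)) ?_
  refine tendsto_id'.1 (tendsto_iff_forall_lipschitz_integral_tendsto.2 ?_)
  rintro f - ⟨L, hf⟩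
  refine tendsto_iff_dist_tendsto_zero.2 (squeeze_zero (fun _ => dist_nonneg)
    (fun ν => abs_integral_sub_le_mul_W1 ν μ hf) ?_)
  simpa using (tendsto_comap (f := fun ν => W1 ν μ) (x := 𝓝 0)).const_mul (L : ℝ)

/-- The Wasserstein space over `X`: its distance is `W1`, its topology is definitionally that of
weak convergence, so that the library's facts about the latter apply to Lipschitz kernels. -/
noncomputable abbrev wassersteinSpace : PseudoMetricSpace (ProbabilityMeasure X) :=
  let W1Space : PseudoMetricSpace (ProbabilityMeasure X) :=
    { dist := W1, dist_self := W1_self, dist_comm := W1_comm, dist_triangle := W1_triangle }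
  W1Space.replaceTopology <| TopologicalSpace.ext_nhds fun μ =>
    (nhds_eq_comap_W1 μ).trans (@nhds_comap_dist _ W1Space μ)

attribute [local instance] wassersteinSpace

lemma W1_eq_dist (μ ν : ProbabilityMeasure X) : W1 μ ν = dist μ ν :=
  rfl

variable {A Y : Type*} [PseudoMetricSpace A]
  [MetricSpace Y] [CompactSpace Y] [MeasurableSpace Y] [BorelSpace Y]

lemma lipschitzWith_integral {K L : ℝ≥0} {k : A → ProbabilityMeasure Y} (hk : LipschitzWith K k)
    {h : A × Y → ℝ} (hh : LipschitzWith L h) :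
    LipschitzWith (L * (1 + K)) fun a => ∫ y, h (a, y) ∂(k a : Measure Y) := by
  have hright (a : A) : LipschitzWith L fun y => h (a, y) := by
    simpa [Function.comp_def] using hh.comp (LipschitzWith.prodMk_left a)
  have hleft (y : Y) : LipschitzWith L fun a => h (a, y) := by
    simpa [Function.comp_def] using hh.comp (LipschitzWith.prodMk_right y)
  refine .of_dist_le_mul fun a b => ?_
  have integrand : |∫ y, h (a, y) ∂(k a : Measure Y) - ∫ y, h (b, y) ∂(k a : Measure Y)|
      ≤ L * dist a b :=
    abs_integral_sub_integral_le (integrable_of_continuous (hright a).continuous)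
      (integrable_of_continuous (hright b).continuous) fun y => (hleft y).dist_le_mul a b
  have measure : |∫ y, h (b, y) ∂(k a : Measure Y) - ∫ y, h (b, y) ∂(k b : Measure Y)|
      ≤ L * (K * dist a b) :=
    (abs_integral_sub_le_mul_W1 _ _ (hright b)).trans
      (mul_le_mul_of_nonneg_left (hk.dist_le_mul a b) L.2)
  calc |∫ y, h (a, y) ∂(k a : Measure Y) - ∫ y, h (b, y) ∂(k b : Measure Y)|
      ≤ L * dist a b + L * (K * dist a b) :=
        (abs_sub_le _ _ _).trans (add_le_add integrand measure)
    _ = (L * (1 + K) : ℝ≥0) * dist a b := by push_cast; ring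

end WassersteinMetric

section Empirical

variable {X : Type*} [MeasurableSpace X] [Nonempty X] {N : ℕ}

lemma coe_emp (hN : N ≠ 0) (x : Fin N → X) :
    (emp N x : Measure X) = (N : ENNReal)⁻¹ • ∑ i, Measure.dirac (x i) :=
  congrArg Subtype.val (dif_neg hN)

lemma integral_emp [MeasurableSingletonClass X] (hN : N ≠ 0) (x : Fin N → X) (f : X → ℝ) :
    ∫ z, f z ∂(emp N x : Measure X) = (N : ℝ)⁻¹ * ∑ i, f (x i) := by
  rw [coe_emp hN, integral_smul_measure,
    integral_finsetSum_measure fun i _ => integrable_dirac (by finiteness)]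
  simp

@[fun_prop]
lemma measurable_emp : Measurable fun x : Fin N → X => emp N x := by
  rcases eq_or_ne N 0 with rfl | hN
  · exact Subsingleton.measurable
  refine Measurable.subtype_mk (f := fun x : Fin N → X => (emp N x : Measure X))
    (Measure.measurable_of_measurable_coe _ fun s hs => ?_)
  simp only [coe_emp hN, Measure.smul_apply, Measure.finsetSum_apply, smul_eq_mul]
  exact (Finset.measurable_sum _ fun i _ =>
    (Measure.measurable_coe hs).comp
      (Measure.measurable_dirac.comp (measurable_pi_apply i))).const_mul _

/-- The state of the limiting system carried by a state of the `N`-agent system. -/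
noncomputable def empState {X0 A : Type*} (s : X0 × A × (Fin N → X)) :
    X0 × A × ProbabilityMeasure X :=
  (s.1, s.2.1, emp N s.2.2)

lemma measurable_empState {X0 A : Type*} [MeasurableSpace X0] [MeasurableSpace A] :
    Measurable (empState : X0 × A × (Fin N → X) → X0 × A × ProbabilityMeasure X) := by
  unfold empState
  fun_prop

end Empirical

section LawOfLargeNumbers

lemma integral_abs_sub_integral_le_sqrt_variance {Ω : Type*} [MeasurableSpace Ω] {P : Measure Ω}
    [IsProbabilityMeasure P] {Z : Ω → ℝ} (hZ : MemLp Z 2 P) :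
    ∫ ω, |Z ω - ∫ ω', Z ω' ∂P| ∂P ≤ √Var[Z; P] := by
  have hdev : MemLp (fun ω => |Z ω - ∫ ω', Z ω' ∂P|) 2 P := (hZ.sub (memLp_const _)).abs
  have hvar := variance_nonneg (fun ω => |Z ω - ∫ ω', Z ω' ∂P|) P
  rw [variance_eq_sub hdev] at hvar
  refine Real.le_sqrt_of_sq_le ?_
  rw [variance_eq_integral hZ.aemeasurable]
  simpa using hvar

variable {X : Type*} [PseudoMetricSpace X] [CompactSpace X] [MeasurableSpace X]
  [BorelSpace X]

lemma variance_le_diam_sq {f : X → ℝ} (hf : LipschitzWith 1 f) (μ : Measure X)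
    [IsProbabilityMeasure μ] : Var[f; μ] ≤ Metric.diam (Set.univ : Set X) ^ 2 := by
  obtain ⟨x₀⟩ := nonempty_of_isProbabilityMeasure μ
  have := variance_le_sq_of_bounded (.of_forall (mem_Icc_of_lipschitzWith_one hf x₀))
    hf.continuous.aemeasurable (μ := μ)
  exact this.trans_eq (by ring)

lemma integral_abs_sum_sub_sum_integral_le {ι : Type*} [Fintype ι] (κ : ι → Measure X)
    [∀ i, IsProbabilityMeasure (κ i)] {f : X → ℝ} (hf : LipschitzWith 1 f) :
    ∫ y, |∑ i, f (y i) - ∑ i, ∫ x, f x ∂κ i| ∂Measure.pi κ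
      ≤ √(Fintype.card ι) * Metric.diam (Set.univ : Set X) := by
  have hmemLp (i : ι) : MemLp f 2 (κ i) := by
    obtain ⟨x₀⟩ := nonempty_of_isProbabilityMeasure (κ i)
    exact memLp_of_bounded (.of_forall (mem_Icc_of_lipschitzWith_one hf x₀))
      hf.continuous.aestronglyMeasurable 2
  have hcoord (i : ι) : MemLp (fun y : ι → X => f (y i)) 2 (Measure.pi κ) :=
    (hmemLp i).comp_measurePreserving (measurePreserving_eval _ i)
  have hmean : ∫ y, ∑ i, f (y i) ∂Measure.pi κ = ∑ i, ∫ x, f x ∂κ i := by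
    rw [integral_finsetSum _ fun i _ => (hcoord i).integrable one_le_two]
    exact Finset.sum_congr rfl fun i _ => integral_comp_eval hf.continuous.aestronglyMeasurable
  have hvar : Var[fun y => ∑ i, f (y i); Measure.pi κ]
      ≤ Fintype.card ι * Metric.diam (Set.univ : Set X) ^ 2 := by
    calc Var[fun y => ∑ i, f (y i); Measure.pi κ] = ∑ i, Var[f; κ i] := by
          simpa [Finset.sum_fn] using variance_sum_pi (X := fun _ => f) hmemLp
      _ ≤ Fintype.card ι * Metric.diam (Set.univ : Set X) ^ 2 := by
          grw [Finset.sum_le_card_nsmul _ _ _ fun i _ => variance_le_diam_sq hf (κ i)]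
          simp
  calc ∫ y, |∑ i, f (y i) - ∑ i, ∫ x, f x ∂κ i| ∂Measure.pi κ
      ≤ √Var[fun y => ∑ i, f (y i); Measure.pi κ] := by
        rw [← hmean]
        exact integral_abs_sub_integral_le_sqrt_variance (memLp_finsetSum _ fun i _ => hcoord i)
    _ ≤ √(Fintype.card ι * Metric.diam (Set.univ : Set X) ^ 2) := Real.sqrt_le_sqrt hvar
    _ = √(Fintype.card ι) * Metric.diam (Set.univ : Set X) := by
        rw [Real.sqrt_mul (Nat.cast_nonneg _), Real.sqrt_sq Metric.diam_nonneg]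

end LawOfLargeNumbers

section EmpiricalConvergence

variable {X : Type*} [MetricSpace X] [CompactSpace X] [MeasurableSpace X] [BorelSpace X]
  [Nonempty X]

variable (X) in
/-- The empirical measure of `N` independent points of `X` is, on average, `W1`-close to every
probability measure `ν` that agrees with the mean `N⁻¹ ∑ κ i` of their laws on Lipschitz test
functions. The bound `η` does not depend on the laws. -/
def EmpiricalErrorLE (N : ℕ) (η : ℝ) : Prop :=
  ∀ (κ : Fin N → Measure X) [∀ i, IsProbabilityMeasure (κ i)] (ν : ProbabilityMeasure X),
    (∀ f : X → ℝ, LipschitzWith 1 f →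
      ∫ x, f x ∂(ν : Measure X) = (N : ℝ)⁻¹ * ∑ i, ∫ x, f x ∂κ i) →
    ∫ y, W1 (emp N y) ν ∂Measure.pi κ ≤ η

lemma empiricalErrorLE_of_finset {ε : ℝ} {T : Finset (X →ᵇ ℝ)} (hT : ∀ g ∈ T, LipschitzWith 1 g)
    (hW : ∀ μ ν : ProbabilityMeasure X,
      W1 μ ν ≤ ε + ∑ g ∈ T, |∫ x, g x ∂(μ : Measure X) - ∫ x, g x ∂(ν : Measure X)|)
    {N : ℕ} (hN : N ≠ 0) :
    EmpiricalErrorLE X N (ε + #T * ((√N)⁻¹ * Metric.diam (Set.univ : Set X))) := by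
  intro κ _ ν hν
  have hint (g) (hg : g ∈ T) : Integrable (fun y : Fin N → X =>
      |∫ x, g x ∂(emp N y : Measure X) - ∫ x, g x ∂(ν : Measure X)|) (Measure.pi κ) := by
    refine .of_bound (((measurable_integral_probabilityMeasure g.continuous.measurable).comp
      measurable_emp).sub_const _).abs.aestronglyMeasurable
      (2 * Metric.diam (Set.univ : Set X)) (.of_forall fun y => ?_)
    simpa using abs_integral_sub_integral_le_two_mul_diam (emp N y) ν (hT g hg)
  have hterm (g) (hg : g ∈ T) :
      ∫ y, |∫ x, g x ∂(emp N y : Measure X) - ∫ x, g x ∂(ν : Measure X)| ∂Measure.pi κ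
        ≤ (√N)⁻¹ * Metric.diam (Set.univ : Set X) := by
    have hsum := integral_abs_sum_sub_sum_integral_le κ (hT g hg)
    simp only [integral_emp hN, hν g (hT g hg), ← mul_sub, abs_mul, integral_const_mul]
    rw [Fintype.card_fin] at hsum
    have hsqrt : (√N)⁻¹ = (N : ℝ)⁻¹ * √N := by rw [inv_mul_eq_div, Real.sqrt_div_self]
    rw [hsqrt, mul_assoc, abs_of_nonneg (by positivity)]
    gcongr
  calc ∫ y, W1 (emp N y) ν ∂Measure.pi κ
      ≤ ∫ y, (ε + ∑ g ∈ T, |∫ x, g x ∂(emp N y : Measure X) - ∫ x, g x ∂(ν : Measure X)|)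
          ∂Measure.pi κ :=
        integral_mono_of_nonneg (.of_forall fun y => W1_nonneg _ _)
          ((integrable_const _).add (integrable_finsetSum _ hint)) (.of_forall fun y => hW _ _)
    _ = ε + ∑ g ∈ T, ∫ y, |∫ x, g x ∂(emp N y : Measure X) - ∫ x, g x ∂(ν : Measure X)|
          ∂Measure.pi κ := by
        rw [integral_add (integrable_const _) (integrable_finsetSum _ hint),
          integral_finsetSum _ hint]
        simp
    _ ≤ ε + #T * ((√N)⁻¹ * Metric.diam (Set.univ : Set X)) := by
        grw [Finset.sum_le_card_nsmul _ _ _ hterm, nsmul_eq_mul]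

lemma eventually_empiricalErrorLE {ε : ℝ} (hε : 0 < ε) :
    ∀ᶠ N : ℕ in atTop, EmpiricalErrorLE X N ε := by
  obtain ⟨T, hT, hW⟩ := exists_finset_W1_le_add_sum (X := X) (half_pos hε)
  have hlim : Tendsto (fun N : ℕ => #T * ((√N)⁻¹ * Metric.diam (Set.univ : Set X)))
      atTop (𝓝 0) := by
    have hsqrt : Tendsto (fun N : ℕ => (√N)⁻¹) atTop (𝓝 0) :=
      (Real.tendsto_sqrt_atTop.comp tendsto_natCast_atTop_atTop).inv_tendsto_atTop
    simpa using (hsqrt.mul_const (Metric.diam (Set.univ : Set X))).const_mul (#T : ℝ)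
  filter_upwards [eventually_ne_atTop 0, hlim.eventually_le_const (half_pos hε)]
    with N hN hsmall κ _ ν hν
  linarith [empiricalErrorLE_of_finset hT hW hN κ ν hν]

end EmpiricalConvergence

section KernelIntegral

variable {S Y Z : Type*} [MeasurableSpace S] [MeasurableSpace Y] [MeasurableSpace Z]

lemma integral_bind_kernel {m : Measure Y} {κ : Kernel Y Z} {f : Z → ℝ}
    (hf : Integrable f (m.bind κ)) : ∫ z, f z ∂m.bind κ = ∫ y, ∫ z, f z ∂κ y ∂m := by
  simpa using Kernel.integral_comp (κ := Kernel.const Unit m) (a := ()) hf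

lemma integrable_integral_kernel {m : Measure Y} {κ : Kernel Y Z} {f : Z → ℝ}
    (hf : Integrable f (m.bind κ)) : Integrable (fun y => ∫ z, f z ∂κ y) m := by
  simpa using Integrable.integral_comp (κ := Kernel.const Unit m) (a := ()) hf

lemma integrable_comp_of_continuous [TopologicalSpace S] [CompactSpace S] [OpensMeasurableSpace S]
    {m : Measure Y} [IsFiniteMeasure m] {g : S → ℝ} (hg : Continuous g) {e : Y → S}
    (he : Measurable e) : Integrable (fun y => g (e y)) m :=
  (integrable_of_continuous (μ := m.map e) hg).comp_measurable he

lemma measurable_map_kernel (κ : Kernel S Y) [IsSFiniteKernel κ] {f : S × Y → Z}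
    (hf : Measurable f) : Measurable fun s => (κ s).map fun y => f (s, y) := by
  have heq (s : S) : (Kernel.id ×ₖ κ).map f s = (κ s).map fun y => f (s, y) := by
    rw [Kernel.map_apply _ hf, Kernel.prod_apply, Kernel.id_apply, Measure.dirac_prod,
      Measure.map_map hf measurable_prodMk_left]
    rfl
  rw [← funext heq]
  exact Kernel.measurable _

/-- The kernel of a measurable family of probability measures. -/
noncomputable def probKernel {k : S → ProbabilityMeasure Y} (hk : Measurable k) : Kernel S Y :=
  ⟨fun s => k s, measurable_toMeasure.comp hk⟩

instance {k : S → ProbabilityMeasure Y} (hk : Measurable k) : IsMarkovKernel (probKernel hk) :=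
  ⟨fun s => (k s).2⟩

/-- The kernel that samples the coordinates `i : ι` independently, the `i`-th one from `κ i`. -/
noncomputable def piKernel {ι : Type*} [Fintype ι] {B : ι → Type*} [∀ i, MeasurableSpace (B i)]
    (κ : ∀ i, Kernel S (B i)) [∀ i, IsMarkovKernel (κ i)] : Kernel S (∀ i, B i) :=
  ⟨fun s => Measure.pi fun i => κ i s, by
    refine .measure_of_isPiSystem_of_isProbabilityMeasure generateFrom_pi.symm isPiSystem_pi ?_
    rintro _ ⟨t, ht, rfl⟩
    simp only [Measure.pi_pi]
    exact Finset.measurable_prod _ fun i _ => (κ i).measurable_coe (ht i (Set.mem_univ i))⟩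

instance {ι : Type*} [Fintype ι] {B : ι → Type*} [∀ i, MeasurableSpace (B i)]
    (κ : ∀ i, Kernel S (B i)) [∀ i, IsMarkovKernel (κ i)] : IsMarkovKernel (piKernel κ) :=
  ⟨fun _ => inferInstanceAs (IsProbabilityMeasure (Measure.pi _))⟩

end KernelIntegral

section MarkovComparison

variable {S S' : Type*} [MeasurableSpace S] [MeasurableSpace S']

/-- The law at time `t` of the Markov chain with transition kernel `κ` and initial law `m`. -/
noncomputable def markovLaw (κ : Kernel S S) (m : Measure S) : ℕ → Measure S
  | 0 => m
  | t + 1 => (markovLaw κ m t).bind κ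

instance (κ : Kernel S S) [IsMarkovKernel κ] (m : Measure S) [IsProbabilityMeasure m] (t : ℕ) :
    IsProbabilityMeasure (markovLaw κ m t) := by
  induction t with
  | zero => assumption
  | succ t ih => exact inferInstanceAs (IsProbabilityMeasure ((markovLaw κ m t).bind κ))

variable [PseudoMetricSpace S]

/-- The image of `m` under `e` is within `δ` of `n`, as measured by Lipschitz test functions. -/
def LipschitzClose (e : S' → S) (m : Measure S') (n : Measure S) (δ : ℝ) : Prop :=
  ∀ ⦃L : ℝ≥0⦄ ⦃g : S → ℝ⦄, LipschitzWith L g → |∫ s, g (e s) ∂m - ∫ s, g s ∂n| ≤ L * δ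

/-- The Markov operator of `κ` increases Lipschitz constants at most by the factor `C`; for a
Markov kernel, this says that `κ` is `C`-Lipschitz in `W1`. -/
def IsLipschitzKernel (C : ℝ≥0) (κ : Kernel S S) : Prop :=
  ∀ ⦃L : ℝ≥0⦄ ⦃g : S → ℝ⦄, LipschitzWith L g → LipschitzWith (L * C) fun s => ∫ s', g s' ∂κ s

variable [CompactSpace S] [OpensMeasurableSpace S] {e : S' → S} {κ' : Kernel S' S'}
  [IsMarkovKernel κ'] {κ : Kernel S S} [IsMarkovKernel κ] {C : ℝ≥0} {δ : ℝ}

lemma LipschitzClose.bind {m : Measure S'} [IsProbabilityMeasure m] {n : Measure S}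
    [IsProbabilityMeasure n] {η : ℝ} (hmn : LipschitzClose e m n η) (he : Measurable e)
    (hκ : IsLipschitzKernel C κ) (hstep : ∀ s, LipschitzClose e (κ' s) (κ (e s)) δ) :
    LipschitzClose e (m.bind κ') (n.bind κ) (C * η + δ) := by
  intro L g hg
  rw [integral_bind_kernel (integrable_comp_of_continuous hg.continuous he),
    integral_bind_kernel (integrable_of_continuous hg.continuous)]
  have hlocal : |∫ s, ∫ s', g (e s') ∂κ' s ∂m - ∫ s, ∫ s', g s' ∂κ (e s) ∂m| ≤ L * δ :=
    abs_integral_sub_integral_le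
      (integrable_integral_kernel (integrable_comp_of_continuous hg.continuous he))
      (integrable_comp_of_continuous (hκ hg).continuous he) fun s => hstep s hg
  have hpropagated := hmn (hκ hg)
  calc |∫ s, ∫ s', g (e s') ∂κ' s ∂m - ∫ s, ∫ s', g s' ∂κ s ∂n|
      ≤ L * δ + (L * C : ℝ≥0) * η := (abs_sub_le _ _ _).trans (add_le_add hlocal hpropagated)
    _ = L * (C * η + δ) := by push_cast; ring

lemma lipschitzClose_markovLaw {m : Measure S'} [IsProbabilityMeasure m] {n : Measure S}
    [IsProbabilityMeasure n] (hmn : LipschitzClose e m n δ) (he : Measurable e)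
    (hκ : IsLipschitzKernel C κ) (hstep : ∀ s, LipschitzClose e (κ' s) (κ (e s)) δ) (t : ℕ) :
    LipschitzClose e (markovLaw κ' m t) (markovLaw κ n t)
      ((∑ j ∈ Finset.range (t + 1), (C : ℝ) ^ j) * δ) := by
  induction t with
  | zero => simpa [markovLaw] using hmn
  | succ t ih =>
    rw [geom_sum_succ, add_mul, one_mul, mul_assoc]
    exact ih.bind he hκ hstep

end MarkovComparison

section MeanFieldModel

attribute [local instance] wassersteinSpace

variable {X X0 A : Type*}
  [MetricSpace X] [CompactSpace X] [MeasurableSpace X] [BorelSpace X]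
  [MetricSpace X0] [CompactSpace X0] [MeasurableSpace X0] [BorelSpace X0]
  [MetricSpace A] [CompactSpace A] [MeasurableSpace A] [BorelSpace A]

lemma lipschitzWith_of_coe_eq_bind {B : Type*} [PseudoMetricSpace B] {K K' : ℝ≥0}
    {ρ : B → ProbabilityMeasure X} (hρ : LipschitzWith K ρ)
    {k : B × X → ProbabilityMeasure A} (hk : LipschitzWith K' k) {τ : B → ProbabilityMeasure A}
    (hτ : ∀ b, (τ b : Measure A) = (ρ b : Measure X).bind fun x => (k (b, x) : Measure A)) :
    LipschitzWith (K' * (1 + K)) τ := by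
  refine .of_dist_le_mul fun b b' => W1_le fun f hf => ?_
  have hint (b : B) : ∫ a, f a ∂(τ b : Measure A)
      = ∫ x, ∫ a, f a ∂(k (b, x) : Measure A) ∂(ρ b : Measure X) := by
    have hsection : Measurable fun x => k (b, x) :=
      (hk.comp (LipschitzWith.prodMk_left b)).continuous.measurable
    have hτint := integrable_of_continuous (μ := (τ b : Measure A)) hf.continuous
    rw [hτ] at hτint ⊢
    exact integral_bind_kernel (κ := probKernel hsection) hτint
  have hinner : LipschitzWith K' fun q => ∫ a, f a ∂(k q : Measure A) :=
    .of_dist_le_mul fun q q' => (abs_integral_sub_le_W1 _ _ hf).trans (hk.dist_le_mul q q')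
  rw [hint, hint]
  exact (lipschitzWith_integral hρ hinner).dist_le_mul b b'

lemma abs_integral_comp_emp_sub_le [Nonempty X] {N : ℕ} {κ : Fin N → Measure X}
    [∀ i, IsProbabilityMeasure (κ i)] {ν : ProbabilityMeasure X} {η : ℝ}
    (hη : ∫ y, W1 (emp N y) ν ∂Measure.pi κ ≤ η) {K : ℝ≥0} {f : ProbabilityMeasure X → ℝ}
    (hf : LipschitzWith K f) :
    |∫ y, f (emp N y) ∂Measure.pi κ - f ν| ≤ K * η := by
  have hintf := integrable_comp_of_continuous (m := Measure.pi κ) hf.continuous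
    (measurable_emp (N := N))
  have hintW : Integrable (fun y => W1 (emp N y) ν) (Measure.pi κ) :=
    integrable_comp_of_continuous (g := fun μ => dist μ ν) (by fun_prop) measurable_emp
  calc |∫ y, f (emp N y) ∂Measure.pi κ - f ν|
      = |∫ y, (f (emp N y) - f ν) ∂Measure.pi κ| := by
        simp [integral_sub hintf (integrable_const _)]
    _ ≤ ∫ y, |f (emp N y) - f ν| ∂Measure.pi κ := abs_integral_le_integral_abs
    _ ≤ ∫ y, K * W1 (emp N y) ν ∂Measure.pi κ :=
        integral_mono (hintf.sub (integrable_const _)).abs (hintW.const_mul _)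
          fun y => hf.dist_le_mul (emp N y) ν
    _ ≤ K * η := by
        rw [integral_const_mul]
        gcongr

variable (X X0 A) in
/-- A major-minor mean field control problem whose data are Lipschitz in `W1`: given the major
state and the mean field, `policy` samples a joint action in `A`; given these three, `major` and
`minor` sample the next major state and the next state of a minor agent. The choice of a minor
action is integrated out in `minor`. -/
structure MeanFieldModel (Kπ K0 KX : ℝ≥0) where
  policy : X0 × ProbabilityMeasure X → ProbabilityMeasure A
  major : X0 × A × ProbabilityMeasure X → ProbabilityMeasure X0
  minor : (X0 × A × ProbabilityMeasure X) × X → ProbabilityMeasure X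
  lipschitzWith_policy : LipschitzWith Kπ policy
  lipschitzWith_major : LipschitzWith K0 major
  lipschitzWith_minor : LipschitzWith KX minor

namespace MeanFieldModel

variable {Kπ K0 KX : ℝ≥0} (M : MeanFieldModel X X0 A Kπ K0 KX)

/-- `policy` as a Markov kernel. -/
noncomputable abbrev policyKernel : Kernel (X0 × ProbabilityMeasure X) A :=
  probKernel M.lipschitzWith_policy.continuous.measurable

/-- `major` as a Markov kernel. -/
noncomputable abbrev majorKernel : Kernel (X0 × A × ProbabilityMeasure X) X0 :=
  probKernel M.lipschitzWith_major.continuous.measurable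

/-- `minor` as a Markov kernel. -/
noncomputable abbrev minorKernel : Kernel ((X0 × A × ProbabilityMeasure X) × X) X :=
  probKernel M.lipschitzWith_minor.continuous.measurable

/-- The deterministic transition of the mean field in the limiting system. -/
noncomputable def meanField (s : X0 × A × ProbabilityMeasure X) : ProbabilityMeasure X :=
  ⟨(s.2.2 : Measure X).bind (M.minorKernel.sectR s), inferInstance⟩

lemma integral_meanField {f : X → ℝ} (hf : Continuous f) (s : X0 × A × ProbabilityMeasure X) :
    ∫ x, f x ∂(M.meanField s : Measure X)
      = ∫ x, ∫ y, f y ∂(M.minor (s, x) : Measure X) ∂(s.2.2 : Measure X) :=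
  integral_bind_kernel (κ := M.minorKernel.sectR s) (integrable_of_continuous hf)

lemma lipschitzWith_meanField : LipschitzWith (KX * 2) M.meanField := by
  have hfield : LipschitzWith 1 fun s : X0 × A × ProbabilityMeasure X => s.2.2 := by
    simpa [Function.comp_def] using LipschitzWith.prod_snd.comp LipschitzWith.prod_snd
  have := lipschitzWith_of_coe_eq_bind hfield M.lipschitzWith_minor (τ := M.meanField)
    fun _ => rfl
  rwa [one_add_one_eq_two] at this

/-- The average of `g` over the joint action played in the major state `y.1` and the mean field
`y.2`. -/
noncomputable def policyMean (g : X0 × A × ProbabilityMeasure X → ℝ)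
    (y : X0 × ProbabilityMeasure X) : ℝ :=
  ∫ a, g (y.1, a, y.2) ∂(M.policy y : Measure A)

lemma lipschitzWith_policyMean {L : ℝ≥0} {g : X0 × A × ProbabilityMeasure X → ℝ}
    (hg : LipschitzWith L g) : LipschitzWith (L * (1 + Kπ)) (M.policyMean g) := by
  have hinsert : LipschitzWith 1
      fun q : (X0 × ProbabilityMeasure X) × A => (q.1.1, q.2, q.1.2) := by
    simpa using (LipschitzWith.prod_fst.comp LipschitzWith.prod_fst).prodMk
      (LipschitzWith.prod_snd.prodMk (LipschitzWith.prod_snd.comp LipschitzWith.prod_fst))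
  have := lipschitzWith_integral M.lipschitzWith_policy (hg.comp hinsert)
  rwa [mul_one] at this

section Act

variable {Z : Type*} [MeasurableSpace Z] {m : Z → ProbabilityMeasure X}

/-- The kernel that completes a major state and a minor configuration `z` by a joint action
sampled from `policy`, where `m z` is the mean field of `z`. -/
noncomputable def act (hm : Measurable m) : Kernel (X0 × Z) (X0 × A × Z) :=
  ⟨fun y => (M.policy (y.1, m y.2) : Measure A).map fun a => (y.1, a, y.2),
    measurable_map_kernel
      (M.policyKernel.comap (fun y : X0 × Z => (y.1, m y.2)) (by fun_prop))
      (f := fun q => (q.1.1, q.2, q.1.2)) (by fun_prop)⟩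

instance (hm : Measurable m) : IsMarkovKernel (M.act hm) :=
  ⟨fun _ => Measure.isProbabilityMeasure_map (by fun_prop)⟩

lemma integral_act (hm : Measurable m) {g : X0 × A × ProbabilityMeasure X → ℝ}
    (hg : Measurable g) (y : X0 × Z) :
    ∫ s, g (s.1, s.2.1, m s.2.2) ∂M.act hm y = M.policyMean g (y.1, m y.2) := by
  refine integral_map (f := fun s : X0 × A × Z => g (s.1, s.2.1, m s.2.2)) ?_ ?_
  · fun_prop
  · exact (hg.comp (by fun_prop)).aestronglyMeasurable

lemma integral_prod_bind_act (hm : Measurable m) {L : ℝ≥0}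
    {g : X0 × A × ProbabilityMeasure X → ℝ} (hg : LipschitzWith L g) (ρ : Measure X0)
    [IsProbabilityMeasure ρ] (n : Measure Z) [IsProbabilityMeasure n] :
    ∫ s, g (s.1, s.2.1, m s.2.2) ∂(ρ.prod n).bind (M.act hm)
      = ∫ y0, ∫ z, M.policyMean g (y0, m z) ∂n ∂ρ := by
  rw [integral_bind_kernel (integrable_comp_of_continuous hg.continuous
    (e := fun s : X0 × A × Z => (s.1, s.2.1, m s.2.2)) (by fun_prop))]
  simp only [M.integral_act hm hg.continuous.measurable]
  exact integral_prod _ (integrable_comp_of_continuous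
    (M.lipschitzWith_policyMean hg).continuous (e := fun y : X0 × Z => (y.1, m y.2)) (by fun_prop))

end Act

/-- The transition kernel of the limiting system. -/
noncomputable def limitStep :
    Kernel (X0 × A × ProbabilityMeasure X) (X0 × A × ProbabilityMeasure X) :=
  M.act measurable_id ∘ₖ (M.majorKernel ×ₖ
    Kernel.deterministic M.meanField M.lipschitzWith_meanField.continuous.measurable)

instance : IsMarkovKernel M.limitStep :=
  inferInstanceAs (IsMarkovKernel (_ ∘ₖ _))

lemma limitStep_apply (s : X0 × A × ProbabilityMeasure X) :
    M.limitStep s = ((M.major s : Measure X0).prod (.dirac (M.meanField s))).bind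
      (M.act measurable_id) := by
  rw [limitStep, Kernel.comp_apply, Kernel.prod_apply, Kernel.deterministic_apply]
  rfl

lemma isLipschitzKernel_limitStep :
    IsLipschitzKernel ((1 + Kπ) * max 1 (KX * 2) * (1 + K0)) M.limitStep := by
  intro L g hg
  have hnext : LipschitzWith (max 1 (KX * 2))
      fun q : (X0 × A × ProbabilityMeasure X) × X0 => (q.2, M.meanField q.1) := by
    simpa using LipschitzWith.prod_snd.prodMk
      (M.lipschitzWith_meanField.comp LipschitzWith.prod_fst)
  have hint (s) : ∫ s', g s' ∂M.limitStep s
      = ∫ y0, M.policyMean g (y0, M.meanField s) ∂(M.major s : Measure X0) := by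
    rw [limitStep_apply]
    simpa using M.integral_prod_bind_act measurable_id hg (M.major s : Measure X0)
      (.dirac (M.meanField s))
  simp only [hint]
  have := lipschitzWith_integral M.lipschitzWith_major
    ((M.lipschitzWith_policyMean hg).comp hnext)
  rwa [mul_assoc, mul_assoc, ← mul_assoc (1 + Kπ)] at this

section Agents

variable [Nonempty X] {N : ℕ}

variable (N) in
/-- The transition kernel of the `N`-agent system. -/
noncomputable def agentStep : Kernel (X0 × A × (Fin N → X)) (X0 × A × (Fin N → X)) :=
  M.act measurable_emp ∘ₖ (M.majorKernel.comap empState measurable_empState ×ₖ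
    piKernel fun i => M.minorKernel.comap (fun s => (empState s, s.2.2 i))
      (measurable_empState.prodMk (by fun_prop)))

instance : IsMarkovKernel (M.agentStep N) :=
  inferInstanceAs (IsMarkovKernel (_ ∘ₖ _))

lemma agentStep_apply (s : X0 × A × (Fin N → X)) :
    M.agentStep N s = ((M.major (empState s) : Measure X0).prod
      (Measure.pi fun i => (M.minor (empState s, s.2.2 i) : Measure X))).bind
        (M.act measurable_emp) := by
  rw [agentStep, Kernel.comp_apply, Kernel.prod_apply]
  rfl

lemma lipschitzClose_prod_bind_act {κ : Fin N → Measure X} [∀ i, IsProbabilityMeasure (κ i)]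
    {ν : ProbabilityMeasure X} {η : ℝ} (hη : ∫ y, W1 (emp N y) ν ∂Measure.pi κ ≤ η)
    (ρ : Measure X0) [IsProbabilityMeasure ρ] :
    LipschitzClose empState ((ρ.prod (Measure.pi κ)).bind (M.act measurable_emp))
      ((ρ.prod (.dirac ν)).bind (M.act measurable_id)) ((1 + Kπ) * η) := by
  intro L g hg
  have hmean := M.lipschitzWith_policyMean hg
  have hagents := M.integral_prod_bind_act measurable_emp hg ρ (Measure.pi κ)
  have hlimit := M.integral_prod_bind_act measurable_id hg ρ (.dirac ν)
  simp only [id_eq, integral_dirac] at hlimit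
  unfold empState
  rw [hagents, hlimit]
  refine abs_integral_sub_integral_le (Integrable.integral_prod_left (integrable_comp_of_continuous
    hmean.continuous (e := fun q : X0 × (Fin N → X) => (q.1, emp N q.2)) (by fun_prop)))
    (integrable_of_continuous (hmean.continuous.comp (by fun_prop))) fun y0 => ?_
  have hright : LipschitzWith (L * (1 + Kπ)) fun μ => M.policyMean g (y0, μ) := by
    simpa [Function.comp_def] using hmean.comp (LipschitzWith.prodMk_left y0)
  simpa [mul_assoc] using abs_integral_comp_emp_sub_le hη hright

lemma lipschitzClose_agentStep (hN : N ≠ 0) {η : ℝ} (hη : EmpiricalErrorLE X N η)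
    (s : X0 × A × (Fin N → X)) :
    LipschitzClose empState (M.agentStep N s) (M.limitStep (empState s)) ((1 + Kπ) * η) := by
  rw [agentStep_apply, limitStep_apply]
  refine M.lipschitzClose_prod_bind_act (hη _ _ fun f hf => ?_) _
  rw [M.integral_meanField hf.continuous]
  exact integral_emp hN s.2.2 _

lemma lipschitzClose_markovLaw (hN : N ≠ 0) {η : ℝ} (hη : EmpiricalErrorLE X N η)
    (μ0 : ProbabilityMeasure X) (ρ : Measure X0) [IsProbabilityMeasure ρ] (t : ℕ) :
    LipschitzClose empState
      (markovLaw (M.agentStep N)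
        ((ρ.prod (Measure.pi fun _ => (μ0 : Measure X))).bind (M.act measurable_emp)) t)
      (markovLaw M.limitStep ((ρ.prod (.dirac μ0)).bind (M.act measurable_id)) t)
      ((∑ j ∈ Finset.range (t + 1), (((1 + Kπ) * max 1 (KX * 2) * (1 + K0) : ℝ≥0) : ℝ) ^ j)
        * ((1 + Kπ) * η)) :=
  _root_.lipschitzClose_markovLaw
    (M.lipschitzClose_prod_bind_act (hη _ μ0 fun f _ => by simp [hN]) ρ)
    measurable_empState M.isLipschitzKernel_limitStep (M.lipschitzClose_agentStep hN hη) t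

end Agents

section UniformConvergence

variable [Nonempty X]

lemma eventually_abs_integral_markovLaw_sub_le (t : ℕ) (L Kπ K0 KX : ℝ≥0) {ε : ℝ} (hε : 0 < ε) :
    ∀ᶠ N in atTop, ∀ (M : MeanFieldModel X X0 A Kπ K0 KX) (μ0 : ProbabilityMeasure X)
      (ρ : Measure X0) [IsProbabilityMeasure ρ] (g : X0 × A × ProbabilityMeasure X → ℝ),
      LipschitzWith L g →
      |∫ s, g (empState s) ∂markovLaw (M.agentStep N)
          ((ρ.prod (Measure.pi fun _ => (μ0 : Measure X))).bind (M.act measurable_emp)) t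
        - ∫ s, g s ∂markovLaw M.limitStep
          ((ρ.prod (.dirac μ0)).bind (M.act measurable_id)) t| ≤ ε := by
  obtain ⟨η, hη, hsmall⟩ := exists_pos_mul_lt hε (L * ((∑ j ∈ Finset.range (t + 1),
    (((1 + Kπ) * max 1 (KX * 2) * (1 + K0) : ℝ≥0) : ℝ) ^ j) * (1 + Kπ)))
  filter_upwards [eventually_ne_atTop 0, eventually_empiricalErrorLE (X := X) hη]
    with N hN herror M μ0 ρ _ g hg
  refine (M.lipschitzClose_markovLaw hN herror μ0 ρ t hg).trans ?_
  simpa only [mul_assoc] using hsmall.le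

end UniformConvergence

lemma prod_dirac_bind_act {Z : Type*} [MeasurableSpace Z] {m : Z → ProbabilityMeasure X}
    (hm : Measurable m) (ρ : Measure X0) [SFinite ρ] (z : Z) :
    (ρ.prod (.dirac z)).bind (M.act hm) = ρ.bind fun y0 => M.act hm (y0, z) := by
  rw [Measure.prod_dirac, ← Measure.bind_dirac_eq_map _ (by fun_prop),
    Measure.bind_bind (by fun_prop) (M.act hm).measurable.aemeasurable]
  simp [Measure.dirac_bind (M.act hm).measurable]

lemma dirac_prod_bind_act {Z : Type*} [MeasurableSpace Z] {m : Z → ProbabilityMeasure X}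
    (hm : Measurable m) (y0 : X0) (n : Measure Z) [SFinite n] :
    ((Measure.dirac y0).prod n).bind (M.act hm) = n.bind fun z => M.act hm (y0, z) := by
  rw [Measure.dirac_prod, ← Measure.bind_dirac_eq_map _ (by fun_prop),
    Measure.bind_bind (by fun_prop) (M.act hm).measurable.aemeasurable]
  simp [Measure.dirac_bind (M.act hm).measurable]

section DecisionRules

variable {U U0 Xi Θ : Type*}
  [MetricSpace U] [CompactSpace U] [MeasurableSpace U] [BorelSpace U]
  [MetricSpace U0] [CompactSpace U0] [MeasurableSpace U0] [BorelSpace U0]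
  [MetricSpace Xi] [CompactSpace Xi] [MeasurableSpace Xi] [BorelSpace Xi]
  {p : X → U → X0 → U0 → ProbabilityMeasure X → ProbabilityMeasure X}
  {p0 : X0 → U0 → ProbabilityMeasure X → ProbabilityMeasure X0}
  {Γ : Xi → X → ProbabilityMeasure U}
  {pit : Θ → X0 → ProbabilityMeasure X → ProbabilityMeasure (U0 × Xi)} {θ : Θ}
  {Kp Kp0 KΓ Kπ : ℝ≥0}

/-- The model in which a joint action `(u⁰, ξ)` consists of a major action and of the parameter of
the decision rule `Γ ξ` that all minor agents follow. -/
noncomputable def ofDecisionRules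
    (hpit : LipschitzWith Kπ fun y : X0 × ProbabilityMeasure X => pit θ y.1 y.2)
    (hp0 : LipschitzWith Kp0
      fun s : X0 × (U0 × Xi) × ProbabilityMeasure X => p0 s.1 s.2.1.1 s.2.2)
    (hΓ : LipschitzWith KΓ
      fun q : (X0 × (U0 × Xi) × ProbabilityMeasure X) × X => Γ q.1.2.1.2 q.2)
    (hp : LipschitzWith Kp fun q : ((X0 × (U0 × Xi) × ProbabilityMeasure X) × X) × U =>
      p q.1.2 q.2 q.1.1.1 q.1.1.2.1.1 q.1.1.2.2) :
    MeanFieldModel X X0 (U0 × Xi) Kπ Kp0 (Kp * (1 + KΓ)) where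
  policy y := pit θ y.1 y.2
  major s := p0 s.1 s.2.1.1 s.2.2
  minor q := ⟨(Γ q.1.2.1.2 q.2 : Measure U).bind
      (probKernel (hp.comp (LipschitzWith.prodMk_left q)).continuous.measurable), inferInstance⟩
  lipschitzWith_policy := hpit
  lipschitzWith_major := hp0
  lipschitzWith_minor := lipschitzWith_of_coe_eq_bind hΓ hp fun _ => rfl

variable (hpit : LipschitzWith Kπ fun y : X0 × ProbabilityMeasure X => pit θ y.1 y.2)
  (hp0 : LipschitzWith Kp0
    fun s : X0 × (U0 × Xi) × ProbabilityMeasure X => p0 s.1 s.2.1.1 s.2.2)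
  (hΓ : LipschitzWith KΓ
    fun q : (X0 × (U0 × Xi) × ProbabilityMeasure X) × X => Γ q.1.2.1.2 q.2)
  (hp : LipschitzWith Kp fun q : ((X0 × (U0 × Xi) × ProbabilityMeasure X) × X) × U =>
    p q.1.2 q.2 q.1.1.1 q.1.1.2.1.1 q.1.1.2.2)

lemma pLawNFrom_eq_markovLaw [Nonempty X] (N : ℕ) (ι : Measure (X0 × (U0 × Xi) × (Fin N → X)))
    (t : ℕ) : pLawNFrom p p0 Γ pit θ N ι t
      = markovLaw ((ofDecisionRules hpit hp0 hΓ hp).agentStep N) ι t := by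
  induction t with
  | zero => rfl
  | succ t ih =>
    rw [pLawNFrom, markovLaw, ih]
    congr 1 with s : 1
    rw [agentStep_apply]
    rfl

lemma pLimLawFrom_eq_markovLaw
    {TG : X0 → U0 → Xi → ProbabilityMeasure X → ProbabilityMeasure X}
    (hTG : ∀ s : X0 × (U0 × Xi) × ProbabilityMeasure X,
      TG s.1 s.2.1.1 s.2.1.2 s.2.2 = (ofDecisionRules hpit hp0 hΓ hp).meanField s)
    (ι : Measure (X0 × (U0 × Xi) × ProbabilityMeasure X)) (t : ℕ) :
    pLimLawFrom p0 pit TG θ ι t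
      = markovLaw (ofDecisionRules hpit hp0 hΓ hp).limitStep ι t := by
  induction t with
  | zero => rfl
  | succ t ih =>
    rw [pLimLawFrom, markovLaw, ih]
    congr 1 with s : 1
    rw [limitStep_apply, prod_dirac_bind_act, ← hTG]
    rfl

end DecisionRules

end MeanFieldModel

end MeanFieldModel

section LipschitzData

attribute [local instance] wassersteinSpace

lemma lipschitzWith_of_dist_le_mul_of_le {B C : Type*} [PseudoMetricSpace B]
    [PseudoMetricSpace C] {τ : B → C} {L : ℝ} {n : ℝ≥0} {d : B → B → ℝ}
    (hτ : ∀ b b', dist (τ b) (τ b') ≤ L * d b b')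
    (hd : ∀ b b', 0 ≤ d b b' ∧ d b b' ≤ n * dist b b') : LipschitzWith (L.toNNReal * n) τ :=
  .of_dist_le_mul fun b b' => by
    obtain ⟨hd0, hdn⟩ := hd b b'
    calc dist (τ b) (τ b') ≤ L * d b b' := hτ b b'
      _ ≤ L.toNNReal * d b b' := by gcongr; exact Real.le_coe_toNNReal L
      _ ≤ L.toNNReal * (n * dist b b') := by gcongr
      _ = (L.toNNReal * n : ℝ≥0) * dist b b' := by push_cast; ring

variable {X U X0 U0 Xi : Type*}
  [MetricSpace X] [CompactSpace X] [MeasurableSpace X] [BorelSpace X] [MetricSpace U]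
  [MetricSpace X0] [MetricSpace U0] [MetricSpace Xi]

lemma lipschitzWith_minor_of_abs_integral_sub_le {Lp : ℝ}
    {p : X → U → X0 → U0 → ProbabilityMeasure X → ProbabilityMeasure X}
    (hp : ∀ (x x' : X) (u u' : U) (x0 x0' : X0) (u0 u0' : U0) (μ μ' : ProbabilityMeasure X)
        (f : X → ℝ), LipschitzWith 1 f →
      |∫ y, f y ∂(p x u x0 u0 μ : Measure X) - ∫ y, f y ∂(p x' u' x0' u0' μ' : Measure X)|
        ≤ Lp * (dist x x' + dist u u' + dist x0 x0' + dist u0 u0' + W1 μ μ')) :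
    LipschitzWith (Lp.toNNReal * 5) fun q : ((X0 × (U0 × Xi) × ProbabilityMeasure X) × X) × U =>
      p q.1.2 q.2 q.1.1.1 q.1.1.2.1.1 q.1.1.2.2 := by
  refine lipschitzWith_of_dist_le_mul_of_le
    (fun q q' => W1_le (hp q.1.2 q'.1.2 q.2 q'.2 q.1.1.1 q'.1.1.1 q.1.1.2.1.1 q'.1.1.2.1.1
      q.1.1.2.2 q'.1.1.2.2)) fun q q' => ?_
  simp only [W1_eq_dist]
  refine ⟨by positivity, ?_⟩
  simp only [Prod.dist_eq, NNReal.coe_ofNat]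
  grind

lemma lipschitzWith_major_of_abs_integral_sub_le [CompactSpace X0] [MeasurableSpace X0]
    [BorelSpace X0] {Lp0 : ℝ}
    {p0 : X0 → U0 → ProbabilityMeasure X → ProbabilityMeasure X0}
    (hp0 : ∀ (x0 x0' : X0) (u0 u0' : U0) (μ μ' : ProbabilityMeasure X) (f : X0 → ℝ),
        LipschitzWith 1 f →
      |∫ y, f y ∂(p0 x0 u0 μ : Measure X0) - ∫ y, f y ∂(p0 x0' u0' μ' : Measure X0)|
        ≤ Lp0 * (dist x0 x0' + dist u0 u0' + W1 μ μ')) :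
    LipschitzWith (Lp0.toNNReal * 3)
      fun s : X0 × (U0 × Xi) × ProbabilityMeasure X => p0 s.1 s.2.1.1 s.2.2 := by
  refine lipschitzWith_of_dist_le_mul_of_le
    (fun s s' => W1_le (hp0 s.1 s'.1 s.2.1.1 s'.2.1.1 s.2.2 s'.2.2)) fun s s' => ?_
  simp only [W1_eq_dist]
  refine ⟨by positivity, ?_⟩
  simp only [Prod.dist_eq, NNReal.coe_ofNat]
  grind

lemma lipschitzWith_decisionRule_of_abs_integral_sub_le
    [CompactSpace U] [MeasurableSpace U] [BorelSpace U] {LPi LΓ : ℝ}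
    {Γ : Xi → X → ProbabilityMeasure U}
    (hΓrule : ∀ (ξ : Xi) (x x' : X) (g : U → ℝ), LipschitzWith 1 g →
      |∫ u, g u ∂(Γ ξ x : Measure U) - ∫ u, g u ∂(Γ ξ x' : Measure U)| ≤ LPi * dist x x')
    (hΓ : ∀ (ξ ξ' : Xi) (x : X) (g : U → ℝ), LipschitzWith 1 g →
      |∫ u, g u ∂(Γ ξ x : Measure U) - ∫ u, g u ∂(Γ ξ' x : Measure U)| ≤ LΓ * dist ξ ξ') :
    LipschitzWith (LΓ.toNNReal + LPi.toNNReal)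
      fun q : (X0 × (U0 × Xi) × ProbabilityMeasure X) × X => Γ q.1.2.1.2 q.2 := by
  have huncurry : LipschitzWith (LΓ.toNNReal + LPi.toNNReal) (Function.uncurry Γ) :=
    .uncurry (fun x => .of_dist_le' fun ξ ξ' => W1_le (hΓ ξ ξ' x))
      (fun ξ => .of_dist_le' fun x x' => W1_le (hΓrule ξ x x'))
  have hproj : LipschitzWith 1
      fun q : (X0 × (U0 × Xi) × ProbabilityMeasure X) × X => (q.1.2.1.2, q.2) := by
    refine .mk_one fun q q' => ?_
    simp only [Prod.dist_eq]
    grind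
  simpa [Function.comp_def] using huncurry.comp hproj

lemma lipschitzWith_policy_of_abs_integral_sub_le [CompactSpace U0] [CompactSpace Xi]
    [MeasurableSpace U0] [BorelSpace U0] [MeasurableSpace Xi] [BorelSpace Xi] {Lpit : ℝ}
    {pit : X0 → ProbabilityMeasure X → ProbabilityMeasure (U0 × Xi)}
    (hpit : ∀ (x0 x0' : X0) (μ μ' : ProbabilityMeasure X) (g : U0 × Xi → ℝ),
      (∀ a b : U0 × Xi, |g a - g b| ≤ dist a.1 b.1 + dist a.2 b.2) →
      |∫ a, g a ∂(pit x0 μ : Measure (U0 × Xi)) - ∫ a, g a ∂(pit x0' μ' : Measure (U0 × Xi))|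
        ≤ Lpit * (dist x0 x0' + W1 μ μ')) :
    LipschitzWith (Lpit.toNNReal * 2) fun y : X0 × ProbabilityMeasure X => pit y.1 y.2 := by
  refine lipschitzWith_of_dist_le_mul_of_le (fun y y' => W1_le fun g hg =>
    hpit y.1 y'.1 y.2 y'.2 g fun a b => ?_) fun y y' => ?_
  · exact (hg.dist_le_mul a b).trans <| by
      simp [Prod.dist_eq]
  · simp only [W1_eq_dist]
    refine ⟨by positivity, ?_⟩
    simp only [Prod.dist_eq, NNReal.coe_ofNat]
    grind

lemma lipschitzWith_observable_of_abs_sub_le {LF : ℝ} {f : X0 × U0 × ProbabilityMeasure X → ℝ}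
    (hf : ∀ a b : X0 × U0 × ProbabilityMeasure X,
      |f a - f b| ≤ LF * (dist a.1 b.1 + dist a.2.1 b.2.1 + W1 a.2.2 b.2.2)) :
    LipschitzWith (LF.toNNReal * 3)
      fun s : X0 × (U0 × Xi) × ProbabilityMeasure X => f (s.1, s.2.1.1, s.2.2) := by
  refine lipschitzWith_of_dist_le_mul_of_le
    (fun s s' => hf (s.1, s.2.1.1, s.2.2) (s'.1, s'.2.1.1, s'.2.2)) fun s s' => ?_
  simp only [W1_eq_dist]
  refine ⟨by positivity, ?_⟩
  simp only [Prod.dist_eq, NNReal.coe_ofNat]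
  grind

end LipschitzData

attribute [local instance] wassersteinSpace in
theorem statement17_general {X U X0 U0 Xi Θ : Type*}
    [MetricSpace X] [CompactSpace X] [MeasurableSpace X] [BorelSpace X] [Nonempty X]
    [MetricSpace U] [CompactSpace U] [MeasurableSpace U] [BorelSpace U]
    [MetricSpace X0] [CompactSpace X0] [MeasurableSpace X0] [BorelSpace X0]
    [MetricSpace U0] [CompactSpace U0] [MeasurableSpace U0] [BorelSpace U0]
    [MetricSpace Xi] [CompactSpace Xi] [MeasurableSpace Xi] [BorelSpace Xi]
    (Lp Lp0 LPi LΓ Lpit LF : ℝ)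
    (p : X → U → X0 → U0 → ProbabilityMeasure X → ProbabilityMeasure X)
    (hp : ∀ (x x' : X) (u u' : U) (x0 x0' : X0) (u0 u0' : U0)
        (μ μ' : ProbabilityMeasure X) (f : X → ℝ), LipschitzWith 1 f →
      |∫ y, f y ∂(p x u x0 u0 μ : Measure X) - ∫ y, f y ∂(p x' u' x0' u0' μ' : Measure X)|
        ≤ Lp * (dist x x' + dist u u' + dist x0 x0' + dist u0 u0' + W1 μ μ'))
    (p0 : X0 → U0 → ProbabilityMeasure X → ProbabilityMeasure X0)
    (hp0 : ∀ (x0 x0' : X0) (u0 u0' : U0) (μ μ' : ProbabilityMeasure X) (f : X0 → ℝ),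
        LipschitzWith 1 f →
      |∫ y, f y ∂(p0 x0 u0 μ : Measure X0) - ∫ y, f y ∂(p0 x0' u0' μ' : Measure X0)|
        ≤ Lp0 * (dist x0 x0' + dist u0 u0' + W1 μ μ'))
    (Γ : Xi → X → ProbabilityMeasure U)
    (hΓrule : ∀ (ξ : Xi) (x x' : X) (g : U → ℝ), LipschitzWith 1 g →
      |∫ u, g u ∂(Γ ξ x : Measure U) - ∫ u, g u ∂(Γ ξ x' : Measure U)| ≤ LPi * dist x x')
    (hΓ : ∀ (ξ ξ' : Xi) (x : X) (g : U → ℝ), LipschitzWith 1 g →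
      |∫ u, g u ∂(Γ ξ x : Measure U) - ∫ u, g u ∂(Γ ξ' x : Measure U)| ≤ LΓ * dist ξ ξ')
    (pit : Θ → X0 → ProbabilityMeasure X → ProbabilityMeasure (U0 × Xi))
    (hpit : ∀ (θ : Θ) (x0 x0' : X0) (μ μ' : ProbabilityMeasure X) (g : U0 × Xi → ℝ),
      (∀ a b : U0 × Xi, |g a - g b| ≤ dist a.1 b.1 + dist a.2 b.2) →
      |∫ a, g a ∂(pit θ x0 μ : Measure (U0 × Xi))
          - ∫ a, g a ∂(pit θ x0' μ' : Measure (U0 × Xi))|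
        ≤ Lpit * (dist x0 x0' + W1 μ μ'))
    (μ0 : ProbabilityMeasure X) (x00 : X0)
    (TG : X0 → U0 → Xi → ProbabilityMeasure X → ProbabilityMeasure X)
    (hTG : ∀ (x0 : X0) (u0 : U0) (ξ : Xi) (μ : ProbabilityMeasure X),
      (TG x0 u0 ξ μ : Measure X) = (μ : Measure X).bind fun x =>
        ((Γ ξ x : Measure U)).bind fun u => (p x u x0 u0 μ : Measure X))
    (F : Set (X0 × U0 × ProbabilityMeasure X → ℝ))
    (hF : ∀ f ∈ F, ∀ a b : X0 × U0 × ProbabilityMeasure X,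
      |f a - f b| ≤ LF * (dist a.1 b.1 + dist a.2.1 b.2.1 + W1 a.2.2 b.2.2)) :
    ∀ t : ℕ, ∀ ε > (0 : ℝ), ∃ N0 : ℕ, ∀ N ≥ N0, ∀ θ : Θ, ∀ f ∈ F,
      |(∫ s, f (s.1, s.2.1.1, emp N s.2.2)
          ∂(pLawNFrom p p0 Γ pit θ N
            ((Measure.pi fun _ : Fin N => (μ0 : Measure X)).bind fun x =>
              ((pit θ x00 (emp N x) : Measure (U0 × Xi))).map fun a => (x00, a, x)) t))
        - ∫ s, f (s.1, s.2.1.1, s.2.2)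
          ∂(pLimLawFrom p0 pit TG θ
            (((pit θ x00 μ0 : Measure (U0 × Xi))).map fun a => (x00, a, μ0)) t)| ≤ ε := by
  intro t ε hε
  have hmajor := lipschitzWith_major_of_abs_integral_sub_le (Xi := Xi) hp0
  have hrule := lipschitzWith_decisionRule_of_abs_integral_sub_le (X0 := X0) (U0 := U0) hΓrule hΓ
  have hminor := lipschitzWith_minor_of_abs_integral_sub_le (Xi := Xi) hp
  obtain ⟨N0, hN0⟩ := eventually_atTop.1 <|
    MeanFieldModel.eventually_abs_integral_markovLaw_sub_le (X := X) (X0 := X0) (A := U0 × Xi) t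
      (LF.toNNReal * 3) (Lpit.toNNReal * 2) (Lp0.toNNReal * 3)
      (Lp.toNNReal * 5 * (1 + (LΓ.toNNReal + LPi.toNNReal))) hε
  refine ⟨N0, fun N hN θ f hf => ?_⟩
  have hpolicy := lipschitzWith_policy_of_abs_integral_sub_le (hpit θ)
  have hbound := hN0 N hN (.ofDecisionRules hpolicy hmajor hrule hminor) μ0 (.dirac x00) _
    (lipschitzWith_observable_of_abs_sub_le (hF f hf))
  rw [MeanFieldModel.dirac_prod_bind_act, MeanFieldModel.prod_dirac_bind_act,
    Measure.dirac_bind (by fun_prop),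
    ← MeanFieldModel.pLawNFrom_eq_markovLaw hpolicy hmajor hrule hminor,
    ← MeanFieldModel.pLimLawFrom_eq_markovLaw hpolicy hmajor hrule hminor
      fun s => Subtype.ext (hTG s.1 s.2.1.1 s.2.1.2 s.2.2)] at hbound
  exact hbound

/-- propagation of chaos under parametrized joint policies. With Lipschitz
`p`, `p⁰`, `r`, an `L_Γ`-Lipschitz parameter map `Γ` into `L_Π`-Lipschitz decision rules, and a
Lipschitz, uniformly bounded joint policy `π̃^θ` with Lipschitz, uniformly bounded log-gradient
(score) `∇_θ log π̃^θ`, for any equi-Lipschitz family `ℱ` on `𝒳⁰ × 𝒰⁰ × 𝒫(𝒳)` and every time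
`t`, uniformly over `f ∈ ℱ` and policy parameters `θ`,
`|E[f(x⁰ₜ^N, u⁰ₜ^N, μₜ^N)] − E[f(x⁰ₜ, u⁰ₜ, μₜ)]| → 0` as `N → ∞`. -/
theorem statement17 {X U X0 U0 Xi Θ : Type*}
    [MetricSpace X] [CompactSpace X] [MeasurableSpace X] [BorelSpace X] [Nonempty X]
    [MetricSpace U] [CompactSpace U] [MeasurableSpace U] [BorelSpace U]
    [MetricSpace X0] [CompactSpace X0] [MeasurableSpace X0] [BorelSpace X0]
    [MetricSpace U0] [CompactSpace U0] [MeasurableSpace U0] [BorelSpace U0]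
    [MetricSpace Xi] [CompactSpace Xi] [MeasurableSpace Xi] [BorelSpace Xi]
    [NormedAddCommGroup Θ] [NormedSpace ℝ Θ] [CompleteSpace Θ]
    (Lp Lp0 Lr LPi LΓ Lpit Ls Cs LF : ℝ)
    (p : X → U → X0 → U0 → ProbabilityMeasure X → ProbabilityMeasure X)
    (hp : ∀ (x x' : X) (u u' : U) (x0 x0' : X0) (u0 u0' : U0)
        (μ μ' : ProbabilityMeasure X) (f : X → ℝ), LipschitzWith 1 f →
      |∫ y, f y ∂(p x u x0 u0 μ : Measure X) - ∫ y, f y ∂(p x' u' x0' u0' μ' : Measure X)|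
        ≤ Lp * (dist x x' + dist u u' + dist x0 x0' + dist u0 u0' + W1 μ μ'))
    (p0 : X0 → U0 → ProbabilityMeasure X → ProbabilityMeasure X0)
    (hp0 : ∀ (x0 x0' : X0) (u0 u0' : U0) (μ μ' : ProbabilityMeasure X) (f : X0 → ℝ),
        LipschitzWith 1 f →
      |∫ y, f y ∂(p0 x0 u0 μ : Measure X0) - ∫ y, f y ∂(p0 x0' u0' μ' : Measure X0)|
        ≤ Lp0 * (dist x0 x0' + dist u0 u0' + W1 μ μ'))
    (r : X0 → U0 → ProbabilityMeasure X → ℝ)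
    (hr : ∀ (x0 x0' : X0) (u0 u0' : U0) (μ μ' : ProbabilityMeasure X),
      |r x0 u0 μ - r x0' u0' μ'| ≤ Lr * (dist x0 x0' + dist u0 u0' + W1 μ μ'))
    (Γ : Xi → X → ProbabilityMeasure U)
    (hΓrule : ∀ (ξ : Xi) (x x' : X) (g : U → ℝ), LipschitzWith 1 g →
      |∫ u, g u ∂(Γ ξ x : Measure U) - ∫ u, g u ∂(Γ ξ x' : Measure U)| ≤ LPi * dist x x')
    (hΓ : ∀ (ξ ξ' : Xi) (x : X) (g : U → ℝ), LipschitzWith 1 g →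
      |∫ u, g u ∂(Γ ξ x : Measure U) - ∫ u, g u ∂(Γ ξ' x : Measure U)| ≤ LΓ * dist ξ ξ')
    (pit : Θ → X0 → ProbabilityMeasure X → ProbabilityMeasure (U0 × Xi))
    (hpit : ∀ (θ θ' : Θ) (x0 x0' : X0) (μ μ' : ProbabilityMeasure X) (g : U0 × Xi → ℝ),
      (∀ a b : U0 × Xi, |g a - g b| ≤ dist a.1 b.1 + dist a.2 b.2) →
      |∫ a, g a ∂(pit θ x0 μ : Measure (U0 × Xi))
          - ∫ a, g a ∂(pit θ' x0' μ' : Measure (U0 × Xi))|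
        ≤ Lpit * (dist θ θ' + dist x0 x0' + W1 μ μ'))
    (score : Θ → X0 → ProbabilityMeasure X → U0 × Xi → Θ)
    (hscoreB : ∀ θ x0 μ a, ‖score θ x0 μ a‖ ≤ Cs)
    (hscoreL : ∀ (θ θ' : Θ) (x0 x0' : X0) (μ μ' : ProbabilityMeasure X) (a a' : U0 × Xi),
      ‖score θ x0 μ a - score θ' x0' μ' a'‖
        ≤ Ls * (dist θ θ' + dist x0 x0' + W1 μ μ' + dist a.1 a'.1 + dist a.2 a'.2))
    (μ0 : ProbabilityMeasure X) (x00 : X0)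
    (TG : X0 → U0 → Xi → ProbabilityMeasure X → ProbabilityMeasure X)
    (hTG : ∀ (x0 : X0) (u0 : U0) (ξ : Xi) (μ : ProbabilityMeasure X),
      (TG x0 u0 ξ μ : Measure X) = (μ : Measure X).bind fun x =>
        ((Γ ξ x : Measure U)).bind fun u => (p x u x0 u0 μ : Measure X))
    (F : Set (X0 × U0 × ProbabilityMeasure X → ℝ))
    (hF : ∀ f ∈ F, ∀ a b : X0 × U0 × ProbabilityMeasure X,
      |f a - f b| ≤ LF * (dist a.1 b.1 + dist a.2.1 b.2.1 + W1 a.2.2 b.2.2)) :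
    ∀ t : ℕ, ∀ ε > (0 : ℝ), ∃ N0 : ℕ, ∀ N ≥ N0, ∀ θ : Θ, ∀ f ∈ F,
      |(∫ s, f (s.1, s.2.1.1, emp N s.2.2)
          ∂(pLawNFrom p p0 Γ pit θ N
            ((Measure.pi fun _ : Fin N => (μ0 : Measure X)).bind fun x =>
              ((pit θ x00 (emp N x) : Measure (U0 × Xi))).map fun a => (x00, a, x)) t))
        - ∫ s, f (s.1, s.2.1.1, s.2.2)
          ∂(pLimLawFrom p0 pit TG θ
            (((pit θ x00 μ0 : Measure (U0 × Xi))).map fun a => (x00, a, μ0)) t)| ≤ ε := by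
  exact statement17_general Lp Lp0 LPi LΓ Lpit LF p hp p0 hp0 Γ hΓrule hΓ pit
    (fun θ => by simpa using hpit θ θ) μ0 x00 TG hTG F hF
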